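/- Fix t ≥ 1, and for k ≥ 1 let δ_k(t) = lim_{N→∞} δ_k^(N)(t) (these limits exist). Then for all k ≥ 1, |δ_k(t) − δ_{k+1}(t)| ≤ 2t / h (k+1); consequently the sequence k ↦ δ_k(t) converges, so δ(t) = lim_{k→∞} δ_k(t) exists. -/

import Mathlib

open MeasureTheory Filter Topology
open scoped ENNReal

/-- `m`-fold concatenation of a word. -/
def wordPow (w : List ℕ) (m : ℕ) : List ℕ := (List.replicate m w).flatten

/-- The words of the generalized del Junco–Rudolph construction:
`B 0 = [0]`, `B (k+1) = (B k)^(a·b^k) ++ [1] ++ (B k)^((b-a)·b^k)`. -/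
def Bword (b a : ℕ) : ℕ → List ℕ
  | 0 => [0]
  | k + 1 => wordPow (Bword b a k) (a * b ^ k) ++ [1] ++ wordPow (Bword b a k) ((b - a) * b ^ k)

/-- The height sequence: `h 0 = 1`, `h (k+1) = b^(k+1) * h k + 1`. -/
def hseq (b : ℕ) : ℕ → ℕ
  | 0 => 1
  | k + 1 => b ^ (k + 1) * hseq b k + 1

/-- The coding distance `δ_k^(N)(t)` computed from the word `ξ^{N,k} = (B k)^N`. -/
noncomputable def deltaN (b a k t N : ℕ) : ℝ :=
  (1 / ((N * hseq b k : ℕ) : ℝ)) *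
    ∑ i ∈ Finset.range (N * hseq b k),
      if i + t < N * hseq b k then
        |(((wordPow (Bword b a k) N).getD (i + t) 0 : ℕ) : ℝ) -
          (((wordPow (Bword b a k) N).getD i 0 : ℕ) : ℝ)|
      else 1

lemma aux_wordPow_length (w : List ℕ) (m : ℕ) : (wordPow w m).length = m * w.length := by
  simp [wordPow]

lemma aux_Bword_length (b a : ℕ) (hab : a ≤ b) (k : ℕ) : (Bword b a k).length = hseq b k := by
  induction k with
  | zero => simp [Bword, hseq]
  | succ k ih =>
    obtain ⟨c, rfl⟩ := Nat.exists_eq_add_of_le hab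
    simp only [Bword, hseq, List.length_append, aux_wordPow_length, ih, List.length_singleton,
      Nat.add_sub_cancel_left]
    ring

lemma aux_hseq_pos (b k : ℕ) : 0 < hseq b k := by
  cases k <;> simp [hseq]

lemma aux_wordPow_getD (w : List ℕ) (m : ℕ) : ∀ i < m * w.length,
    (wordPow w m).getD i 0 = w.getD (i % w.length) 0 := by
  induction m with
  | zero => intro i hi; simp at hi
  | succ m ih =>
    intro i hi
    have e : wordPow w (m + 1) = w ++ wordPow w m := by simp [wordPow, List.replicate_succ]
    rw [e]
    by_cases h : i < w.length
    · rw [List.getD_append _ _ _ _ h, Nat.mod_eq_of_lt h]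
    · push Not at h
      rw [List.getD_append_right _ _ _ _ h, ih _ (by rw [Nat.succ_mul] at hi; omega),
        ← Nat.mod_eq_sub_mod h]

lemma aux_Bword_le (b a k : ℕ) : ∀ x ∈ Bword b a k, x ≤ 1 := by
  induction k with
  | zero => simp [Bword]
  | succ k ih =>
    intro x hx
    simp only [Bword, wordPow, List.mem_append, List.mem_flatten, List.mem_replicate,
      List.mem_singleton] at hx
    rcases hx with (⟨l, ⟨_, rfl⟩, h⟩ | rfl) | ⟨l, ⟨_, rfl⟩, h⟩
    · exact ih x h
    · exact le_rfl
    · exact ih x h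

lemma aux_getD_le (b a k i : ℕ) : (Bword b a k).getD i 0 ≤ 1 := by
  by_cases h : i < (Bword b a k).length
  · rw [List.getD_eq_getElem _ _ h]
    exact aux_Bword_le b a k _ (List.getElem_mem h)
  · push Not at h
    rw [List.getD_eq_default _ _ h]; simp

/-- periodic extension -/
def auxX (b a k i : ℕ) : ℕ := (Bword b a k).getD (i % hseq b k) 0

/-- mismatch -/
noncomputable def auxC (b a k t i : ℕ) : ℝ := |(auxX b a k (i + t) : ℝ) - (auxX b a k i : ℝ)|

noncomputable def auxP (b a k t : ℕ) : ℝ := ∑ i ∈ Finset.range (hseq b k), auxC b a k t i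

lemma aux_abs_sub {m n : ℕ} (hm : m ≤ 1) (hn : n ≤ 1) : |(m : ℝ) - n| ≤ 1 := by
  have h1 : (m : ℝ) ≤ 1 := by exact_mod_cast hm
  have h2 : (n : ℝ) ≤ 1 := by exact_mod_cast hn
  have h3 : (0 : ℝ) ≤ m := Nat.cast_nonneg _
  have h4 : (0 : ℝ) ≤ n := Nat.cast_nonneg _
  rw [abs_le]; constructor <;> linarith

lemma auxC_nonneg (b a k t i : ℕ) : 0 ≤ auxC b a k t i := abs_nonneg _

lemma auxC_le (b a k t i : ℕ) : auxC b a k t i ≤ 1 :=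
  aux_abs_sub (aux_getD_le _ _ _ _) (aux_getD_le _ _ _ _)

lemma auxX_add (b a k i : ℕ) : auxX b a k (i + hseq b k) = auxX b a k i := by
  simp [auxX]

lemma auxC_add (b a k t i : ℕ) : auxC b a k t (i + hseq b k) = auxC b a k t i := by
  unfold auxC
  rw [add_right_comm, auxX_add, auxX_add]

lemma auxC_add_mul (b a k t n i : ℕ) : auxC b a k t (n * hseq b k + i) = auxC b a k t i := by
  induction n with
  | zero => simp
  | succ n ih => rw [← ih, Nat.succ_mul, add_right_comm, auxC_add]

lemma aux_sum_mul (b a k t n : ℕ) :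
    ∑ i ∈ Finset.range (n * hseq b k), auxC b a k t i = n * auxP b a k t := by
  induction n with
  | zero => simp
  | succ n ih =>
    rw [Nat.succ_mul, Finset.sum_range_add, ih]
    simp only [auxC_add_mul]
    rw [← auxP]; push_cast; ring

lemma aux_window (b a k t s : ℕ) :
    ∑ i ∈ Finset.range (hseq b k), auxC b a k t (i + s) = auxP b a k t := by
  induction s with
  | zero => rfl
  | succ s ih =>
    rw [← ih]
    have h1 := Finset.sum_range_succ (fun i => auxC b a k t (i + s)) (hseq b k)
    have h2 := Finset.sum_range_succ' (fun i => auxC b a k t (i + s)) (hseq b k)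
    have h3 : auxC b a k t (hseq b k + s) = auxC b a k t (0 + s) := by
      rw [add_comm, auxC_add, zero_add]
    have h4 : ∀ i, auxC b a k t (i + (s + 1)) = auxC b a k t (i + 1 + s) := fun i => by
      congr 1; ring
    simp only [h4]
    linarith

lemma aux_count (f g : ℕ → ℝ) (n t : ℕ) (hf0 : ∀ i, 0 ≤ f i) (hf1 : ∀ i, f i ≤ 1)
    (hg0 : ∀ i, 0 ≤ g i) (hg1 : ∀ i, g i ≤ 1) (h : ∀ i, i + t < n → f i = g i) :
    |∑ i ∈ Finset.range n, f i - ∑ i ∈ Finset.range n, g i| ≤ t := by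
  rw [← Finset.sum_sub_distrib]
  have key : ∀ i ∈ Finset.range n, |f i - g i| ≤ if n ≤ i + t then (1 : ℝ) else 0 := by
    intro i _
    split_ifs with hi
    · rw [abs_le]; constructor <;> linarith [hf0 i, hf1 i, hg0 i, hg1 i]
    · rw [h i (by omega)]; simp
  refine (Finset.abs_sum_le_sum_abs _ _).trans ((Finset.sum_le_sum key).trans ?_)
  rw [Finset.sum_boole]
  have hs : (Finset.range n).filter (fun i => n ≤ i + t) ⊆ Finset.Ico (n - t) n := by
    intro i hi
    simp only [Finset.mem_filter, Finset.mem_range] at hi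
    rw [Finset.mem_Ico]; omega
  have := Finset.card_le_card hs
  rw [Nat.card_Ico] at this
  exact_mod_cast this.trans (by omega)

lemma aux_deltaN (b a k t N : ℕ) (hab : a ≤ b) (hN : 1 ≤ N) :
    |deltaN b a k t N - auxP b a k t / hseq b k| ≤ t / N := by
  have hh : (0 : ℝ) < hseq b k := by exact_mod_cast aux_hseq_pos b k
  have hh1 : (1 : ℝ) ≤ hseq b k := by exact_mod_cast aux_hseq_pos b k
  have hN0 : (0 : ℝ) < N := by exact_mod_cast hN
  have hl := aux_Bword_length b a hab k
  have hg : ∀ i, (wordPow (Bword b a k) N).getD i 0 ≤ 1 := by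
    intro i
    by_cases hi : i < N * (Bword b a k).length
    · rw [aux_wordPow_getD _ _ _ hi]; exact aux_getD_le _ _ _ _
    · rw [List.getD_eq_default _ _ (by rw [aux_wordPow_length]; omega)]; simp
  have := aux_count (fun i => if i + t < N * hseq b k then
        |(((wordPow (Bword b a k) N).getD (i + t) 0 : ℕ) : ℝ) -
          (((wordPow (Bword b a k) N).getD i 0 : ℕ) : ℝ)|
      else 1) (auxC b a k t) (N * hseq b k) t
      (by intro i; split_ifs <;> positivity)
      (by
        intro i; split_ifs
        · exact aux_abs_sub (hg _) (hg _)
        · exact le_rfl)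
      (auxC_nonneg _ _ _ _) (auxC_le _ _ _ _)
      (by
        intro i hi
        rw [if_pos hi, aux_wordPow_getD _ _ _ (by rw [hl]; exact hi),
          aux_wordPow_getD _ _ _ (by rw [hl]; omega), hl]
        rfl)
  rw [aux_sum_mul] at this
  unfold deltaN
  set S := ∑ i ∈ Finset.range (N * hseq b k), (if i + t < N * hseq b k then
        |(((wordPow (Bword b a k) N).getD (i + t) 0 : ℕ) : ℝ) -
          (((wordPow (Bword b a k) N).getD i 0 : ℕ) : ℝ)|
      else 1) with hS
  have e : 1 / ((N * hseq b k : ℕ) : ℝ) * S - auxP b a k t / hseq b k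
      = (S - N * auxP b a k t) / (N * hseq b k) := by
    push_cast; field_simp
  rw [e, abs_div, abs_of_pos (mul_pos hN0 hh)]
  apply div_le_div₀ (by positivity) this hN0
  nlinarith

lemma aux_lim (b a k t : ℕ) (hab : a ≤ b) :
    Tendsto (fun N => deltaN b a k t N) atTop (𝓝 (auxP b a k t / hseq b k)) := by
  rw [tendsto_iff_dist_tendsto_zero]
  refine squeeze_zero' (Eventually.of_forall fun _ => dist_nonneg) ?_
    (tendsto_const_div_atTop_nhds_zero_nat (t : ℝ))
  filter_upwards [eventually_ge_atTop 1] with N hN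
  rw [Real.dist_eq]
  exact aux_deltaN b a k t N hab hN

lemma auxX_succ (b a k i : ℕ) (hab : a ≤ b) (hi : i < b ^ (k + 1) * hseq b k) :
    auxX b a (k + 1) (i + (a * b ^ k * hseq b k + 1)) = auxX b a k i := by
  have hl := aux_Bword_length b a hab k
  obtain ⟨c, rfl⟩ := Nat.exists_eq_add_of_le hab
  set b := a + c with hb
  set h := hseq b k with hh
  have hH : hseq b (k + 1) = a * b ^ k * h + 1 + c * b ^ k * h := by
    simp only [hseq]; rw [← hh, pow_succ]; nth_rewrite 2 [hb]; ring
  have hH' : b ^ (k + 1) * h = a * b ^ k * h + c * b ^ k * h := by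
    have : hseq b (k + 1) = b ^ (k + 1) * h + 1 := rfl
    omega
  have hc : b - a = c := by omega
  unfold auxX
  rw [hH]
  simp only [Bword, hc]
  rw [hH'] at hi
  have l1 : (wordPow (Bword b a k) (a * b ^ k)).length = a * b ^ k * h := by
    rw [aux_wordPow_length, hl]
  by_cases h1 : i < c * b ^ k * h
  · rw [Nat.mod_eq_of_lt (by omega), List.getD_append_right]
    · rw [List.length_append, l1, List.length_singleton, Nat.add_sub_cancel,
        aux_wordPow_getD _ _ _ (by rw [hl]; exact h1), hl]
    · rw [List.length_append, l1, List.length_singleton]; omega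
  · obtain ⟨j, rfl⟩ := Nat.exists_eq_add_of_le (Nat.le_of_not_lt h1)
    have e : c * b ^ k * h + j + (a * b ^ k * h + 1) = j + (a * b ^ k * h + 1 + c * b ^ k * h) := by
      ring
    have hj : j < a * b ^ k * h := by omega
    rw [e, Nat.add_mod_right, Nat.mod_eq_of_lt (by omega), List.append_assoc,
      List.getD_append _ _ _ _ (by rw [l1]; exact hj),
      aux_wordPow_getD _ _ _ (by rw [hl]; exact hj), hl, Nat.mul_add_mod_self_right]

lemma aux_P_bounds (b a k t : ℕ) : 0 ≤ auxP b a k t / hseq b k ∧ auxP b a k t / hseq b k ≤ 1 := by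
  have hh : (0 : ℝ) < hseq b k := by exact_mod_cast aux_hseq_pos b k
  constructor
  · exact div_nonneg (Finset.sum_nonneg fun i _ => auxC_nonneg _ _ _ _ _) hh.le
  · rw [div_le_one hh]
    refine (Finset.sum_le_sum fun i _ => auxC_le b a k t i).trans ?_
    simp

lemma aux_main (b a k t : ℕ) (hab : a ≤ b) (ht : 1 ≤ t) :
    |auxP b a k t / hseq b k - auxP b a (k + 1) t / hseq b (k + 1)|
      ≤ 2 * (t : ℝ) / (hseq b (k + 1) : ℝ) := by
  have hH : (0 : ℝ) < hseq b (k + 1) := by exact_mod_cast aux_hseq_pos b (k + 1)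
  have hh : (0 : ℝ) < hseq b k := by exact_mod_cast aux_hseq_pos b k
  have b1 := aux_P_bounds b a k t
  have b2 := aux_P_bounds b a (k + 1) t
  have ht' : (1 : ℝ) ≤ t := by exact_mod_cast ht
  by_cases hc : hseq b (k + 1) ≤ t
  · have hc' : (hseq b (k + 1) : ℝ) ≤ t := by exact_mod_cast hc
    have : 1 ≤ 2 * (t : ℝ) / (hseq b (k + 1) : ℝ) := by
      rw [le_div_iff₀ hH]; linarith
    refine le_trans ?_ this
    rw [abs_le]; constructor <;> linarith
  · have hHe : hseq b (k + 1) = b ^ (k + 1) * hseq b k + 1 := rfl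
    have hw := aux_window b a (k + 1) t (a * b ^ k * hseq b k + 1)
    rw [hHe, Finset.sum_range_succ] at hw
    have hm := aux_sum_mul b a k t (b ^ (k + 1))
    have hcount := aux_count (fun i => auxC b a (k + 1) t (i + (a * b ^ k * hseq b k + 1)))
      (auxC b a k t) (b ^ (k + 1) * hseq b k) t (fun i => auxC_nonneg _ _ _ _ _)
      (fun i => auxC_le _ _ _ _ _) (auxC_nonneg _ _ _ _) (auxC_le _ _ _ _)
      (by
        intro i hi
        dsimp only [auxC]
        rw [add_right_comm, auxX_succ b a k _ hab hi, auxX_succ b a k _ hab (by omega)])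
    have c0 := auxC_nonneg b a (k + 1) t (b ^ (k + 1) * hseq b k + (a * b ^ k * hseq b k + 1))
    have c1 := auxC_le b a (k + 1) t (b ^ (k + 1) * hseq b k + (a * b ^ k * hseq b k + 1))
    rw [hm, abs_le] at hcount
    have hHr : (hseq b (k + 1) : ℝ) = (b ^ (k + 1) : ℕ) * hseq b k + 1 := by
      rw [hHe]; push_cast; ring
    set d := auxP b a k t / hseq b k with hd
    have hP : auxP b a k t = d * hseq b k := by rw [hd]; field_simp
    have e : d - auxP b a (k + 1) t / hseq b (k + 1)
        = (d + (b ^ (k + 1) : ℕ) * auxP b a k t - auxP b a (k + 1) t) / hseq b (k + 1) := by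
      rw [eq_div_iff hH.ne', sub_mul, div_mul_cancel₀ _ hH.ne', hHr, hP]; ring
    rw [e, abs_div, abs_of_pos hH]
    apply div_le_div_of_nonneg_right _ hH.le
    rw [abs_le]
    constructor <;> linarith [hcount.1, hcount.2, b1.1, b1.2]

lemma aux_hseq_ge (b : ℕ) (hb : 2 ≤ b) (k : ℕ) : 2 ^ k ≤ hseq b k := by
  induction k with
  | zero => simp [hseq]
  | succ k ih =>
    have h1 : 2 ≤ b ^ (k + 1) := hb.trans (Nat.le_self_pow (by omega) b)
    have h2 := Nat.mul_le_mul h1 ih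
    simp only [hseq]; rw [pow_succ]; omega

/-- the limits `δ_k(t)` satisfy `|δ_k(t) - δ_{k+1}(t)| ≤ 2t / h (k+1)`,
hence `δ(t) = lim_{k→∞} δ_k(t)` exists. -/
theorem deltak_cauchy_and_converges (b a : ℕ) (hb : 2 ≤ b) (ha1 : 1 ≤ a) (ha2 : a ≤ b - 1)
    (t : ℕ) (ht : 1 ≤ t) (δk : ℕ → ℝ)
    (hδk : ∀ k ≥ 1, Tendsto (fun N => deltaN b a k t N) atTop (𝓝 (δk k))) :
    (∀ k ≥ 1, |δk k - δk (k + 1)| ≤ 2 * (t : ℝ) / (hseq b (k + 1) : ℝ)) ∧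
    ∃ L : ℝ, Tendsto δk atTop (𝓝 L) := by
  have hab : a ≤ b := by omega
  have hval : ∀ k ≥ 1, δk k = auxP b a k t / hseq b k := fun k hk =>
    tendsto_nhds_unique (hδk k hk) (aux_lim b a k t hab)
  have key : ∀ k ≥ 1, |δk k - δk (k + 1)| ≤ 2 * (t : ℝ) / (hseq b (k + 1) : ℝ) := by
    intro k hk
    rw [hval k hk, hval (k + 1) (by omega)]
    exact aux_main b a k t hab ht
  refine ⟨key, ?_⟩
  have hc : CauchySeq (fun n => δk (n + 1)) := by
    apply cauchySeq_of_le_geometric (1 / 2 : ℝ) (2 * t) (by norm_num)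
    intro n
    rw [Real.dist_eq]
    refine (key (n + 1) (by omega)).trans ?_
    rw [one_div, inv_pow, ← div_eq_mul_inv]
    apply div_le_div_of_nonneg_left (by positivity) (by positivity)
    have h1 := aux_hseq_ge b hb (n + 1 + 1)
    have h2 : 2 ^ n ≤ hseq b (n + 1 + 1) :=
      (Nat.pow_le_pow_right (by norm_num) (by omega)).trans h1
    exact_mod_cast h2
  obtain ⟨L, hL⟩ := cauchySeq_tendsto_of_complete hc
  exact ⟨L, (tendsto_add_atTop_iff_nat 1).1 hL⟩
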